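/- Let μ > 0 and λ > 0 be such that the supremum of E[U(X)] − μ·h(X) − λ·E[ρX] over X ∈ L⁰₊ is finite. If X* ∈ L⁰₊ maximizes E[U(X)] − μ·h(X) − λ·E[ρX] over X ∈ L⁰₊, then U′(X*) − λρ − μ·h′(X*) ≤ 0 a.s. -/

import Mathlib

/-!
The function `h` has the directional bound `E[Z ψ_X(X + Z)] ≤ h(X) - h(X + Z)` for `X, Z ∈ L⁰₊`,
from `1 + t ≤ e^t` and `(x - y) / x ≤ log x - log y`. Comparing a maximizer `X` with `X + Z` for
`Z = t 1_B` and every event `B`, this turns optimality into the pointwise inequality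
`t⁻¹ (U(X + t) - U(X)) + μ ψ_X(X + t) ≤ λ ρ`, almost surely for each `t > 0`. Let `t ↓ 0`: where
`X = 0` the difference quotients would be unbounded by the Inada condition, so `X > 0`, and there
the inequality becomes `U'(X) + μ ψ_X(X) ≤ λ ρ`, with `h'(X) = -ψ_X(X)`.
-/

open MeasureTheory Filter Set
open scoped ENNReal

noncomputable section

variable {Ω : Type*} [MeasurableSpace Ω]

/-- Entropic risk measure `h_a(X) = (1/a) log E[e^{-aX}]`. -/
def entropic (P : Measure Ω) (a : ℝ) (X : Ω → ℝ) : ℝ :=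
  (1 / a) * Real.log (∫ ω, Real.exp (-a * X ω) ∂P)

/-- Weighted entropic risk measure `h(X) = ∫_{[a₀,a₁]} h_a(X) m(da)`. -/
def werm (P : Measure Ω) (m : Measure ℝ) (a₀ a₁ : ℝ) (X : Ω → ℝ) : ℝ :=
  ∫ a in Set.Icc a₀ a₁, entropic P a X ∂m

/-- Marginal risk density transform `h′(X) = -∫_{[a₀,a₁]} e^{-aX}/E[e^{-aX}] m(da)`. -/
def hprime (P : Measure Ω) (m : Measure ℝ) (a₀ a₁ : ℝ) (X : Ω → ℝ) (ω : Ω) : ℝ :=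
  -∫ a in Set.Icc a₀ a₁, Real.exp (-a * X ω) / (∫ ω', Real.exp (-a * X ω') ∂P) ∂m

/-- Extended-real-valued expectation `E[f] = ∫ f⁺ - ∫ f⁻ ∈ [-∞,∞]`. -/
def eint (P : Measure Ω) (f : Ω → ℝ) : EReal :=
  ((∫⁻ ω, ENNReal.ofReal (f ω) ∂P : ℝ≥0∞) : EReal)
    - ((∫⁻ ω, ENNReal.ofReal (-(f ω)) ∂P : ℝ≥0∞) : EReal)

/-- `E[ρX] ∈ [0,∞]` for a nonnegative payoff. -/
def budget (P : Measure Ω) (ρ X : Ω → ℝ) : ℝ≥0∞ := ∫⁻ ω, ENNReal.ofReal (ρ ω * X ω) ∂P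

/-- `X ∈ L⁰₊`: a nonnegative random variable. -/
def Lpos (P : Measure Ω) (X : Ω → ℝ) : Prop := Measurable X ∧ ∀ᵐ ω ∂P, 0 ≤ X ω

/-- Objective of the Lagrangian risk-minimization problem: `h(X) + λ E[ρX]`. -/
def robj (P : Measure Ω) (m : Measure ℝ) (a₀ a₁ : ℝ) (ρ : Ω → ℝ) (lam : ℝ) (X : Ω → ℝ) : EReal :=
  ((werm P m a₀ a₁ X : ℝ) : EReal) + (lam : EReal) * ((budget P ρ X : ℝ≥0∞) : EReal)

/-- `ψ_X(y) = ∫_{[a₀,a₁]} e^{-ay} / E[e^{-aX}] m(da)`. -/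
def psi (P : Measure Ω) (m : Measure ℝ) (a₀ a₁ : ℝ) (X : Ω → ℝ) (y : ℝ) : ℝ :=
  ∫ a in Set.Icc a₀ a₁, Real.exp (-a * y) / (∫ ω, Real.exp (-a * X ω) ∂P) ∂m

/-- Inverse of `ψ_X` on `(0,∞)` (realized via `sSup`, since `ψ_X` is continuous, strictly
decreasing with limits `∞` at `-∞` and `0` at `∞`). -/
def psiInv (P : Measure Ω) (m : Measure ℝ) (a₀ a₁ : ℝ) (X : Ω → ℝ) (z : ℝ) : ℝ :=
  sSup {y : ℝ | z ≤ psi P m a₀ a₁ X y}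

/-- The transform `𝐓X = max(ψ_X⁻¹(λρ), 0)`. -/
def Ttrans (P : Measure Ω) (m : Measure ℝ) (a₀ a₁ lam : ℝ) (ρ : Ω → ℝ) (X : Ω → ℝ) : Ω → ℝ :=
  fun ω => max (psiInv P m a₀ a₁ X (lam * ρ ω)) 0

/-- `X ∈ 𝒳(x)`: nonnegative and `E[ρX] ≤ x`. -/
def feasible (P : Measure Ω) (ρ : Ω → ℝ) (x : ℝ) (X : Ω → ℝ) : Prop :=
  Lpos P X ∧ budget P ρ X ≤ ENNReal.ofReal x

/-- `γ₁(x)`: the minimal value of `h` over `𝒳(x)`. -/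
def gamma1 (P : Measure Ω) (m : Measure ℝ) (a₀ a₁ : ℝ) (ρ : Ω → ℝ) (x : ℝ) : ℝ :=
  sInf (werm P m a₀ a₁ '' {X | feasible P ρ x X})

/-- Expected utility `E[U(X)] ∈ [-∞,∞]`. -/
def eutil (P : Measure Ω) (U : ℝ → ℝ) (X : Ω → ℝ) : EReal := eint P (fun ω => U (X ω))

/-- Full Lagrangian objective `E[U(X)] - μ h(X) - λ E[ρX]`. -/
def fullObj (P : Measure Ω) (m : Measure ℝ) (a₀ a₁ : ℝ) (ρ : Ω → ℝ) (U : ℝ → ℝ)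
    (μ lam : ℝ) (X : Ω → ℝ) : EReal :=
  eutil P U X - ((μ * werm P m a₀ a₁ X : ℝ) : EReal)
    - (lam : EReal) * ((budget P ρ X : ℝ≥0∞) : EReal)

open ProbabilityTheory
open scoped Topology

section ExtendedExpectation

variable {P : Measure Ω} {f : Ω → ℝ}

theorem eint_eq_coe_integral (hf : Integrable f P) : eint P f = ((∫ ω, f ω ∂P : ℝ) : EReal) := by
  rw [integral_eq_lintegral_pos_part_sub_lintegral_neg_part hf, EReal.coe_sub,
    EReal.coe_ennreal_toReal hf.lintegral_lt_top.ne,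
    EReal.coe_ennreal_toReal (show Integrable (fun ω => -f ω) P from hf.neg).lintegral_lt_top.ne]
  rfl

-- The negative part is treated first: `⊤ - ⊤ = ⊥` in `EReal`.
theorem integrable_of_eint_eq_coe {r : ℝ} (hf : AEMeasurable f P) (h : eint P f = r) :
    Integrable f P := by
  unfold eint at h
  have hneg : ∫⁻ ω, ENNReal.ofReal (-f ω) ∂P ≠ ⊤ := fun htop => by simp [htop] at h
  have hpos : ∫⁻ ω, ENNReal.ofReal (f ω) ∂P ≠ ⊤ := fun htop => by
    rw [htop, EReal.coe_ennreal_top, EReal.top_sub (by simpa using hneg)] at h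
    exact EReal.top_ne_coe r h
  refine ⟨hf.aestronglyMeasurable, ?_⟩
  calc ∫⁻ ω, ‖f ω‖ₑ ∂P
      ≤ ∫⁻ ω, (ENNReal.ofReal (f ω) + ENNReal.ofReal (-f ω)) ∂P := by
        refine lintegral_mono fun ω => ?_
        rw [Real.enorm_eq_ofReal_abs, abs_eq_max_neg, ENNReal.ofReal_max]
        exact max_le_add_of_nonneg zero_le zero_le
    _ = ∫⁻ ω, ENNReal.ofReal (f ω) ∂P + ∫⁻ ω, ENNReal.ofReal (-f ω) ∂P :=
        lintegral_add_left' hf.ennreal_ofReal _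
    _ < ⊤ := ENNReal.add_lt_top.2 ⟨hpos.lt_top, hneg.lt_top⟩

end ExtendedExpectation

section MeasureTheoretic

variable {P : Measure Ω}

theorem ae_frequently_of_frequently_ae {ι : Type*} {l : Filter ι} [l.IsCountablyGenerated]
    {p : ι → Ω → Prop} (h : ∃ᶠ i in l, ∀ᵐ ω ∂P, p i ω) : ∀ᵐ ω ∂P, ∃ᶠ i in l, p i ω := by
  obtain ⟨u, hu, hpu⟩ := exists_seq_forall_of_frequently h
  filter_upwards [ae_all_iff.2 hpu] with ω hω
  exact hu.frequently (Frequently.of_forall hω)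

theorem aemeasurable_comp_of_monotoneOn {X : Ω → ℝ} {U : ℝ → ℝ} {s : Set ℝ}
    (hs : MeasurableSet s) (hU : MonotoneOn U s) (hXm : Measurable X) (hXs : ∀ᵐ ω ∂P, X ω ∈ s) :
    AEMeasurable (fun ω => U (X ω)) P := by
  have hmap : (P.map X).restrict s = P.map X :=
    Measure.restrict_eq_self_of_ae_mem ((ae_map_iff hXm.aemeasurable hs).2 hXs)
  have hUmap := aemeasurable_restrict_of_monotoneOn (μ := P.map X) hs hU
  rw [hmap] at hUmap
  exact hUmap.comp_measurable hXm

theorem apply_indicator_const {α E F : Type*} [Zero E] [Zero F] {g : α → E → F}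
    (hg : ∀ x, g x 0 = 0) (s : Set α) (c : E) (x : α) :
    g x (s.indicator (fun _ => c) x) = s.indicator (fun x => g x c) x := by
  by_cases hx : x ∈ s <;> simp [hx, hg]

end MeasureTheoretic

section Concave

variable {U U' : ℝ → ℝ}

theorem monotoneOn_Ici_of_monotoneOn_Ioi {a : ℝ} (hU : MonotoneOn U (Ioi a))
    (hc : ContinuousWithinAt U (Ioi a) a) : MonotoneOn U (Ici a) := by
  rw [← Ioi_insert]
  refine hU.insert_of_continuousWithinAt ?_ hc
  exact mem_closure_iff_clusterPt.1 (by simp)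

theorem concaveOn_closure {E : Type*} [AddCommGroup E] [Module ℝ E] [TopologicalSpace E]
    [IsTopologicalAddGroup E] [ContinuousSMul ℝ E] {s : Set E} {f : E → ℝ}
    (hf : ConcaveOn ℝ s f) (hc : ContinuousOn f (closure s)) : ConcaveOn ℝ (closure s) f := by
  refine ⟨hf.1.closure, fun x hx y hy a b ha hb hab => ?_⟩
  have hcomb : MapsTo (fun p : E × E => a • p.1 + b • p.2) (closure (s ×ˢ s)) (closure s) := by
    rintro ⟨p, q⟩ hpq
    rw [closure_prod_eq] at hpq
    exact hf.1.closure hpq.1 hpq.2 ha hb hab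
  have hfst : MapsTo Prod.fst (closure (s ×ˢ s)) (closure s) := fun p hp => by
    rw [closure_prod_eq] at hp; exact hp.1
  have hsnd : MapsTo Prod.snd (closure (s ×ˢ s)) (closure s) := fun p hp => by
    rw [closure_prod_eq] at hp; exact hp.2
  refine le_on_closure (s := s ×ˢ s) (f := fun p => a • f p.1 + b • f p.2)
    (g := fun p => f (a • p.1 + b • p.2)) (fun p hp => hf.2 hp.1 hp.2 ha hb hab) ?_ ?_
    (x := (x, y)) (by rw [closure_prod_eq]; exact ⟨hx, hy⟩)
  · exact ((hc.comp continuousOn_fst hfst).const_smul a).add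
      ((hc.comp continuousOn_snd hsnd).const_smul b)
  · exact hc.comp (by fun_prop) hcomb

theorem sub_le_sub_zero_of_concaveOn {x t : ℝ} (hU : ConcaveOn ℝ (Ici 0) U) (hx : 0 ≤ x)
    (ht : 0 ≤ t) : U (x + t) - U x ≤ U t - U 0 := by
  rcases (add_nonneg hx ht).eq_or_lt with hs | hs
  · obtain ⟨rfl, rfl⟩ : x = 0 ∧ t = 0 := ⟨by linarith, by linarith⟩
    simp
  -- `x` and `t` are complementary convex combinations of `x + t` and `0`.
  have hsum : x / (x + t) + t / (x + t) = 1 := by field_simp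
  have hUx := hU.2 (mem_Ici.2 hs.le) self_mem_Ici (div_nonneg hx hs.le) (div_nonneg ht hs.le) hsum
  have hUt := hU.2 (mem_Ici.2 hs.le) self_mem_Ici (div_nonneg ht hs.le) (div_nonneg hx hs.le)
    (by rwa [add_comm])
  simp only [smul_eq_mul, mul_zero, add_zero, div_mul_cancel₀ _ hs.ne'] at hUx hUt
  have hadd : U (x + t) + U 0 = (x / (x + t) + t / (x + t)) * (U (x + t) + U 0) := by
    rw [hsum, one_mul]
  linarith

theorem tendsto_slope_zero_atTop_of_concaveOn (hU : ConcaveOn ℝ (Ici 0) U)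
    (hU' : ∀ y, 0 < y → HasDerivAt U (U' y) y) (hInada : Tendsto U' (𝓝[>] 0) atTop) :
    Tendsto (fun t => t⁻¹ * (U t - U 0)) (𝓝[>] 0) atTop := by
  refine tendsto_atTop_mono' _ ?_ hInada
  filter_upwards [self_mem_nhdsWithin] with t (ht : 0 < t)
  have hslope := hU.le_slope_of_hasDerivAt self_mem_Ici (mem_Ici.2 ht.le) ht (hU' t ht)
  rwa [slope_def_field, sub_zero, div_eq_inv_mul] at hslope

theorem pos_of_frequently_slope_le (hU : ConcaveOn ℝ (Ici 0) U)
    (hU' : ∀ y, 0 < y → HasDerivAt U (U' y) y) (hInada : Tendsto U' (𝓝[>] 0) atTop) {x c : ℝ}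
    (hx : 0 ≤ x) (h : ∃ᶠ t in 𝓝[>] 0, t⁻¹ * (U (x + t) - U x) ≤ c) : 0 < x := by
  refine hx.lt_of_ne fun hx0 => ?_
  obtain ⟨t, hle, hlt⟩ := (h.and_eventually
    ((tendsto_slope_zero_atTop_of_concaveOn hU hU' hInada).eventually_gt_atTop c)).exists
  rw [← hx0, zero_add] at hle
  exact hle.not_gt hlt

end Concave

section Laplace

variable {P : Measure Ω} {X Z : Ω → ℝ} {a : ℝ}

theorem Lpos.add (hX : Lpos P X) (hZ : Lpos P Z) : Lpos P fun ω => X ω + Z ω :=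
  ⟨hX.1.add hZ.1, by filter_upwards [hX.2, hZ.2] with ω using add_nonneg⟩

variable [IsFiniteMeasure P]

theorem integrable_exp_neg_mul (hX : Lpos P X) (ha : 0 ≤ a) :
    Integrable (fun ω => Real.exp (-a * X ω)) P := by
  have hXm := hX.1
  refine Integrable.of_bound (by fun_prop) 1 ?_
  filter_upwards [hX.2] with ω hω
  rw [Real.norm_of_nonneg (Real.exp_pos _).le, Real.exp_le_one_iff, neg_mul]
  exact neg_nonpos.2 (mul_nonneg ha hω)

theorem mgf_neg_pos [NeZero P] (hX : Lpos P X) (ha : 0 ≤ a) : 0 < mgf X P (-a) :=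
  mgf_pos' (NeZero.ne P) (integrable_exp_neg_mul hX ha)

theorem continuousOn_mgf_neg (hX : Lpos P X) : ContinuousOn (fun a => mgf X P (-a)) (Ioi 0) := by
  have hint : Iio 0 ⊆ interior (integrableExpSet X P) :=
    isOpen_Iio.subset_interior_iff.2 fun t (ht : t < 0) => by
      simpa [integrableExpSet] using integrable_exp_neg_mul hX (neg_nonneg.2 ht.le)
  exact (continuousOn_mgf.mono hint).comp continuousOn_neg
    fun a (ha : 0 < a) => mem_Iio.2 (neg_lt_zero.2 ha)

end Laplace

section EntropicRisk

variable {P : Measure Ω} {m : Measure ℝ} {X Z : Ω → ℝ} {a a₀ a₁ : ℝ}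

theorem psi_nonneg (y : ℝ) : 0 ≤ psi P m a₀ a₁ X y :=
  integral_nonneg fun _ => div_nonneg (Real.exp_pos _).le mgf_nonneg

variable [IsFiniteMeasure P] [NeZero P] [IsLocallyFiniteMeasure m]

theorem integrableOn_inv_mgf_neg (ha₀ : 0 < a₀) (hX : Lpos P X) :
    IntegrableOn (fun a => (mgf X P (-a))⁻¹) (Icc a₀ a₁) m := by
  refine ContinuousOn.integrableOn_compact isCompact_Icc ?_
  refine ((continuousOn_mgf_neg hX).mono fun a ha => ha₀.trans_le ha.1).inv₀ fun a ha => ?_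
  exact (mgf_neg_pos hX (ha₀.le.trans ha.1)).ne'

theorem integrableOn_entropic (ha₀ : 0 < a₀) (hX : Lpos P X) :
    IntegrableOn (fun a => entropic P a X) (Icc a₀ a₁) m := by
  have hpos : Icc a₀ a₁ ⊆ Ioi 0 := fun a ha => ha₀.trans_le ha.1
  refine ContinuousOn.integrableOn_compact isCompact_Icc (ContinuousOn.mul ?_ ?_)
  · exact continuousOn_const.div continuousOn_id fun a ha => (hpos ha).ne'
  · exact ((continuousOn_mgf_neg hX).mono hpos).log fun a ha =>
      (mgf_neg_pos hX (hpos ha).le).ne'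

theorem continuousOn_psi (ha₀ : 0 < a₀) (hX : Lpos P X) :
    ContinuousOn (psi P m a₀ a₁ X) (Ici 0) := by
  have hinv := integrableOn_inv_mgf_neg (m := m) (a₁ := a₁) ha₀ hX
  refine continuousOn_of_dominated (fun y _ => ?_) (fun y hy => ?_) hinv
    (Eventually.of_forall fun a => by fun_prop)
  · exact AEStronglyMeasurable.mul (by fun_prop) hinv.aestronglyMeasurable
  · filter_upwards [ae_restrict_mem measurableSet_Icc] with a ha
    have hexp : Real.exp (-a * y) ≤ 1 :=
      Real.exp_le_one_iff.2 (by nlinarith [mul_nonneg (ha₀.le.trans ha.1) hy])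
    change ‖Real.exp (-a * y) / mgf X P (-a)‖ ≤ _
    rw [Real.norm_of_nonneg (div_nonneg (Real.exp_pos _).le mgf_nonneg), div_eq_mul_inv]
    exact mul_le_of_le_one_left (inv_nonneg.2 mgf_nonneg) hexp

-- `1 + t ≤ e^t` at `t = az`, multiplied by `e^{-a(x+z)}`.
theorem mul_exp_neg_mul_add_le (a x z : ℝ) :
    a * z * Real.exp (-a * (x + z)) ≤ Real.exp (-a * x) - Real.exp (-a * (x + z)) := by
  have hsplit : Real.exp (-a * x) = Real.exp (a * z) * Real.exp (-a * (x + z)) := by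
    rw [← Real.exp_add]; ring_nf
  rw [hsplit]
  nlinarith [mul_le_mul_of_nonneg_right (Real.add_one_le_exp (a * z))
    (Real.exp_pos (-a * (x + z))).le]

theorem div_le_log_sub_log {x y : ℝ} (hx : 0 < x) (hy : 0 < y) :
    (x - y) / x ≤ Real.log x - Real.log y := by
  have hlog := Real.one_sub_inv_le_log_of_pos (div_pos hx hy)
  rwa [Real.log_div hx.ne' hy.ne', inv_div, one_sub_div hx.ne'] at hlog

theorem integral_mul_exp_div_mgf_le_entropic_sub (ha : 0 < a) (hX : Lpos P X) (hZ : Lpos P Z) :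
    ∫ ω, Z ω * (Real.exp (-a * (X ω + Z ω)) / mgf X P (-a)) ∂P
      ≤ entropic P a X - entropic P a fun ω => X ω + Z ω := by
  have iX := integrable_exp_neg_mul hX ha.le
  have iXZ := integrable_exp_neg_mul (hX.add hZ) ha.le
  have hMX := mgf_neg_pos hX ha.le
  have hnum : ∫ ω, a * Z ω * Real.exp (-a * (X ω + Z ω)) ∂P
      ≤ mgf X P (-a) - mgf (fun ω => X ω + Z ω) P (-a) := by
    refine (integral_mono_of_nonneg ?_ (iX.sub iXZ) ?_).trans_eq (integral_sub iX iXZ)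
    · filter_upwards [hZ.2] with ω hω
      exact mul_nonneg (mul_nonneg ha.le hω) (Real.exp_pos _).le
    · exact Eventually.of_forall fun ω => mul_exp_neg_mul_add_le a (X ω) (Z ω)
  calc ∫ ω, Z ω * (Real.exp (-a * (X ω + Z ω)) / mgf X P (-a)) ∂P
      = 1 / a * ((∫ ω, a * Z ω * Real.exp (-a * (X ω + Z ω)) ∂P) / mgf X P (-a)) := by
        rw [← integral_div, ← integral_const_mul]
        congr 1 with ω
        field_simp
    _ ≤ 1 / a * (Real.log (mgf X P (-a)) - Real.log (mgf (fun ω => X ω + Z ω) P (-a))) := by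
        gcongr
        exact (div_le_div_of_nonneg_right hnum hMX.le).trans
          (div_le_log_sub_log hMX (mgf_neg_pos (hX.add hZ) ha.le))
    _ = entropic P a X - entropic P a fun ω => X ω + Z ω := mul_sub _ _ _

theorem integrable_mul_exp_div_mgf (ha₀ : 0 < a₀) (hX : Lpos P X) (hZ : Lpos P Z) :
    Integrable (fun p : Ω × ℝ => Z p.1 * (Real.exp (-p.2 * (X p.1 + Z p.1)) / mgf X P (-p.2)))
      (P.prod (m.restrict (Icc a₀ a₁))) := by
  have hXm := hX.1
  have hZm := hZ.1
  have hinv := integrableOn_inv_mgf_neg (m := m) (a₁ := a₁) ha₀ hX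
  refine ((hinv.const_mul a₀⁻¹).comp_snd P).mono' ?_ ?_
  · exact AEStronglyMeasurable.mul (hZm.comp measurable_fst).aestronglyMeasurable
      (AEStronglyMeasurable.mul (by fun_prop) hinv.aestronglyMeasurable.comp_snd)
  · filter_upwards [Measure.quasiMeasurePreserving_fst.ae (hX.2.and hZ.2),
      Measure.quasiMeasurePreserving_snd.ae (ae_restrict_mem measurableSet_Icc)]
      with p ⟨hXp, hZp⟩ hp
    have hnum : Z p.1 * Real.exp (-p.2 * (X p.1 + Z p.1)) ≤ a₀⁻¹ := by
      have hexp : Real.exp (-p.2 * X p.1) ≤ 1 :=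
        Real.exp_le_one_iff.2 (by nlinarith [mul_nonneg (ha₀.le.trans hp.1) hXp])
      have hle := mul_exp_neg_mul_add_le p.2 (X p.1) (Z p.1)
      have hpos := Real.exp_pos (-p.2 * (X p.1 + Z p.1))
      rw [← one_div, le_div_iff₀' ha₀]
      linarith [mul_le_mul_of_nonneg_right hp.1 (mul_nonneg hZp hpos.le)]
    rw [Real.norm_of_nonneg (mul_nonneg hZp (div_nonneg (Real.exp_pos _).le mgf_nonneg)),
      div_eq_mul_inv, ← mul_assoc]
    exact mul_le_mul_of_nonneg_right hnum (inv_nonneg.2 mgf_nonneg)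

theorem integrable_mul_psi (ha₀ : 0 < a₀) (hX : Lpos P X) (hZ : Lpos P Z) :
    Integrable (fun ω => Z ω * psi P m a₀ a₁ X (X ω + Z ω)) P := by
  simp_rw [psi, ← integral_const_mul]
  exact (integrable_mul_exp_div_mgf ha₀ hX hZ).integral_prod_left

theorem integral_mul_psi_le_werm_sub (ha₀ : 0 < a₀) (hX : Lpos P X) (hZ : Lpos P Z) :
    ∫ ω, Z ω * psi P m a₀ a₁ X (X ω + Z ω) ∂P
      ≤ werm P m a₀ a₁ X - werm P m a₀ a₁ fun ω => X ω + Z ω := by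
  have hint := integrable_mul_exp_div_mgf (m := m) (a₁ := a₁) ha₀ hX hZ
  have iX := integrableOn_entropic (m := m) (a₁ := a₁) ha₀ hX
  have iXZ := integrableOn_entropic (m := m) (a₁ := a₁) ha₀ (hX.add hZ)
  calc ∫ ω, Z ω * psi P m a₀ a₁ X (X ω + Z ω) ∂P
      = ∫ a in Icc a₀ a₁, ∫ ω, Z ω * (Real.exp (-a * (X ω + Z ω)) / mgf X P (-a)) ∂P ∂m := by
        simp_rw [psi, ← integral_const_mul]
        exact integral_integral_swap hint
    _ ≤ ∫ a in Icc a₀ a₁, (entropic P a X - entropic P a fun ω => X ω + Z ω) ∂m :=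
        setIntegral_mono_on hint.integral_prod_right (iX.sub iXZ) measurableSet_Icc fun a ha =>
          integral_mul_exp_div_mgf_le_entropic_sub (ha₀.trans_le ha.1) hX hZ
    _ = werm P m a₀ a₁ X - werm P m a₀ a₁ fun ω => X ω + Z ω := integral_sub iX iXZ

end EntropicRisk

section Lagrangian

variable {P : Measure Ω} {m : Measure ℝ} {a₀ a₁ μ lam : ℝ} {ρ X Z : Ω → ℝ} {U U' : ℝ → ℝ}

theorem fullObj_eq_coe (hρ0 : ∀ᵐ ω ∂P, 0 ≤ ρ ω) (hX : Lpos P X)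
    (iU : Integrable (fun ω => U (X ω)) P) (iρ : Integrable (fun ω => ρ ω * X ω) P) :
    fullObj P m a₀ a₁ ρ U μ lam X =
      ((∫ ω, U (X ω) ∂P - μ * werm P m a₀ a₁ X - lam * ∫ ω, ρ ω * X ω ∂P : ℝ) : EReal) := by
  have hρX : 0 ≤ᵐ[P] fun ω => ρ ω * X ω := by
    filter_upwards [hρ0, hX.2] with ω using mul_nonneg
  rw [fullObj, eutil, eint_eq_coe_integral iU, budget,
    ← ofReal_integral_eq_lintegral_ofReal iρ hρX, EReal.coe_ennreal_ofReal,
    max_eq_left (integral_nonneg_of_ae hρX)]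
  norm_cast

theorem budget_ne_top_of_fullObj_eq_coe {r : ℝ} (hlam : 0 < lam)
    (h : fullObj P m a₀ a₁ ρ U μ lam X = r) : budget P ρ X ≠ ⊤ := fun htop => by
  rw [fullObj, htop, EReal.coe_ennreal_top, EReal.coe_mul_top_of_pos hlam, EReal.sub_top] at h
  exact EReal.bot_ne_coe r h

theorem integrable_mul_of_budget_ne_top (hρ : AEMeasurable ρ P) (hρ0 : ∀ᵐ ω ∂P, 0 ≤ ρ ω)
    (hX : Lpos P X) (h : budget P ρ X ≠ ⊤) : Integrable (fun ω => ρ ω * X ω) P :=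
  (lintegral_ofReal_ne_top_iff_integrable (hρ.mul hX.1.aemeasurable).aestronglyMeasurable
    (by filter_upwards [hρ0, hX.2] with ω using mul_nonneg)).1 h

theorem integrable_utility_of_fullObj_eq_coe {r : ℝ} (hlam : 0 < lam)
    (hUX : AEMeasurable (fun ω => U (X ω)) P) (h : fullObj P m a₀ a₁ ρ U μ lam X = r) :
    Integrable (fun ω => U (X ω)) P := by
  have hb := budget_ne_top_of_fullObj_eq_coe hlam h
  rw [fullObj, ← EReal.coe_ennreal_toReal hb, ← EReal.coe_mul] at h
  induction he : eutil P U X with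
  | bot => simp [he] at h
  | coe e => exact integrable_of_eint_eq_coe hUX he
  | top => rw [he, EReal.top_sub_coe, EReal.top_sub_coe] at h; exact absurd h (EReal.top_ne_coe r)

theorem integral_increment_add_psi_le [IsFiniteMeasure P] [NeZero P] [IsLocallyFiniteMeasure m]
    (ha₀ : 0 < a₀) (hρ0 : ∀ᵐ ω ∂P, 0 ≤ ρ ω) (hμ : 0 ≤ μ) (hX : Lpos P X) (hZ : Lpos P Z)
    (iU : Integrable (fun ω => U (X ω)) P) (iρ : Integrable (fun ω => ρ ω * X ω) P)
    (hmax : IsMaxOn (fullObj P m a₀ a₁ ρ U μ lam) {Y | Lpos P Y} X)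
    (iUZ : Integrable (fun ω => U (X ω + Z ω) - U (X ω)) P)
    (iρZ : Integrable (fun ω => ρ ω * Z ω) P) :
    ∫ ω, (U (X ω + Z ω) - U (X ω)) ∂P + μ * ∫ ω, Z ω * psi P m a₀ a₁ X (X ω + Z ω) ∂P
      ≤ lam * ∫ ω, ρ ω * Z ω ∂P := by
  have iUXZ : Integrable (fun ω => U (X ω + Z ω)) P := 
    (iUZ.add iU).congr (Eventually.of_forall fun _ => sub_add_cancel _ _)
  have iρXZ : Integrable (fun ω => ρ ω * (X ω + Z ω)) P := by
    simp only [mul_add]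
    exact iρ.add iρZ
  have hle : fullObj P m a₀ a₁ ρ U μ lam (fun ω => X ω + Z ω) ≤ fullObj P m a₀ a₁ ρ U μ lam X :=
    hmax (hX.add hZ)
  rw [fullObj_eq_coe hρ0 hX iU iρ, fullObj_eq_coe hρ0 (hX.add hZ) iUXZ iρXZ,
    EReal.coe_le_coe_iff] at hle
  simp only [mul_add, integral_add iρ iρZ] at hle
  rw [integral_sub iUXZ iU]
  linarith [mul_le_mul_of_nonneg_left
    (integral_mul_psi_le_werm_sub (m := m) (a₁ := a₁) ha₀ hX hZ) hμ]

theorem integrable_increment [IsFiniteMeasure P] {t : ℝ} (hU : ConcaveOn ℝ (Ici 0) U)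
    (hUmono : MonotoneOn U (Ici 0)) (hX : Lpos P X) (ht : 0 ≤ t) :
    Integrable (fun ω => U (X ω + t) - U (X ω)) P := by
  have hXt : Lpos P fun ω => X ω + t := hX.add ⟨measurable_const, Eventually.of_forall fun _ => ht⟩
  refine Integrable.of_bound
    ((aemeasurable_comp_of_monotoneOn measurableSet_Ici hUmono hXt.1 hXt.2).sub
      (aemeasurable_comp_of_monotoneOn measurableSet_Ici hUmono hX.1 hX.2)).aestronglyMeasurable
    (U t - U 0) ?_
  filter_upwards [hX.2] with ω hω
  rw [Real.norm_of_nonneg (sub_nonneg.2 (hUmono hω (add_nonneg hω ht) (by linarith)))]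
  exact sub_le_sub_zero_of_concaveOn hU hω ht

theorem ae_slope_add_psi_le [IsFiniteMeasure P] [NeZero P] [IsLocallyFiniteMeasure m]
    (ha₀ : 0 < a₀) (hρ : Integrable ρ P) (hρ0 : ∀ᵐ ω ∂P, 0 ≤ ρ ω)
    (hU : ConcaveOn ℝ (Ici 0) U) (hUmono : MonotoneOn U (Ici 0)) (hμ : 0 ≤ μ) (hX : Lpos P X)
    (iU : Integrable (fun ω => U (X ω)) P) (iρ : Integrable (fun ω => ρ ω * X ω) P)
    (hmax : IsMaxOn (fullObj P m a₀ a₁ ρ U μ lam) {Y | Lpos P Y} X) {t : ℝ} (ht : 0 < t) :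
    ∀ᵐ ω ∂P, t⁻¹ * (U (X ω + t) - U (X ω)) + μ * psi P m a₀ a₁ X (X ω + t) ≤ lam * ρ ω := by
  have iD := integrable_increment hU hUmono hX ht.le
  have iψ : Integrable (fun ω => t * psi P m a₀ a₁ X (X ω + t)) P :=
    integrable_mul_psi ha₀ hX ⟨measurable_const, Eventually.of_forall fun _ => ht.le⟩
  have iρt : Integrable (fun ω => ρ ω * t) P := hρ.mul_const t
  suffices h : (fun ω => (U (X ω + t) - U (X ω)) + μ * (t * psi P m a₀ a₁ X (X ω + t)))
      ≤ᵐ[P] fun ω => lam * (ρ ω * t) by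
    filter_upwards [h] with ω hω
    calc t⁻¹ * (U (X ω + t) - U (X ω)) + μ * psi P m a₀ a₁ X (X ω + t)
        = t⁻¹ * (U (X ω + t) - U (X ω) + μ * (t * psi P m a₀ a₁ X (X ω + t))) := by field_simp
      _ ≤ t⁻¹ * (lam * (ρ ω * t)) := by gcongr
      _ = lam * ρ ω := by field_simp
  refine ae_le_of_forall_setIntegral_le (iD.add (iψ.const_mul μ)) (iρt.const_mul lam)
    fun B hB _ => ?_
  have hZ : Lpos P (B.indicator fun _ => t) :=
    ⟨measurable_const.indicator hB, Eventually.of_forall (indicator_nonneg fun _ _ => ht.le)⟩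
  have hD := funext (apply_indicator_const (g := fun ω z => U (X ω + z) - U (X ω)) (by simp) B t)
  have hψ := funext
    (apply_indicator_const (g := fun ω z => z * psi P m a₀ a₁ X (X ω + z)) (by simp) B t)
  have hρB := funext (apply_indicator_const (g := fun ω z => ρ ω * z) (by simp) B t)
  have hle := integral_increment_add_psi_le ha₀ hρ0 hμ hX hZ iU iρ hmax
    (hD ▸ iD.indicator hB) (hρB ▸ iρt.indicator hB)
  rw [hD, hψ, hρB, integral_indicator hB, integral_indicator hB, integral_indicator hB] at hle
  rwa [integral_add iD.integrableOn (iψ.const_mul μ).integrableOn, integral_const_mul μ,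
    integral_const_mul lam]

end Lagrangian

theorem eu_lagrangian_foc_le_general {P : Measure Ω} [IsFiniteMeasure P] [NeZero P]
    {a₀ a₁ : ℝ} (ha₀ : 0 < a₀) {m : Measure ℝ} [IsLocallyFiniteMeasure m]
    {ρ : Ω → ℝ} (hρ0 : ∀ᵐ ω ∂P, 0 ≤ ρ ω) (hρint : Integrable ρ P)
    {U U' : ℝ → ℝ} (hUmono : MonotoneOn U (Ici 0)) (hUconc : ConcaveOn ℝ (Ici 0) U)
    (hUd : ∀ y, 0 < y → HasDerivAt U (U' y) y) (hInada0 : Tendsto U' (𝓝[>] 0) atTop)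
    {μ lam : ℝ} (hμ : 0 ≤ μ) (hlam : 0 < lam)
    (hfin : ∃ r : ℝ, sSup (fullObj P m a₀ a₁ ρ U μ lam '' {X | Lpos P X}) = (r : EReal))
    {X : Ω → ℝ} (hX : Lpos P X) (hXmax : IsMaxOn (fullObj P m a₀ a₁ ρ U μ lam) {Y | Lpos P Y} X) :
    ∀ᵐ ω ∂P, U' (X ω) - lam * ρ ω - μ * hprime P m a₀ a₁ X ω ≤ 0 := by
  obtain ⟨r, hsup⟩ := hfin
  have hr : fullObj P m a₀ a₁ ρ U μ lam X = r :=
    (hXmax.isLUB (show X ∈ {Y | Lpos P Y} from hX)).sSup_eq.symm.trans hsup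
  have iU := integrable_utility_of_fullObj_eq_coe hlam
    (aemeasurable_comp_of_monotoneOn measurableSet_Ici hUmono hX.1 hX.2) hr
  have iρ := integrable_mul_of_budget_ne_top hρint.aemeasurable hρ0 hX
    (budget_ne_top_of_fullObj_eq_coe hlam hr)
  have hslope := ae_frequently_of_frequently_ae (l := 𝓝[>] (0 : ℝ)) <|
    Eventually.frequently <| eventually_mem_nhdsWithin.mono fun t ht =>
      ae_slope_add_psi_le ha₀ hρint hρ0 hUconc hUmono hμ hX iU iρ hXmax ht
  filter_upwards [hslope, hX.2] with ω hω hX0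
  have hpos : 0 < X ω := pos_of_frequently_slope_le hUconc hUd hInada0 hX0 <|
    hω.mono fun t ht => (le_add_of_nonneg_right (mul_nonneg hμ (psi_nonneg _))).trans ht
  have hψ : Tendsto (fun t => psi P m a₀ a₁ X (X ω + t)) (𝓝[>] 0) (𝓝 (psi P m a₀ a₁ X (X ω))) := by
    refine ((continuousOn_psi ha₀ hX).continuousAt (Ici_mem_nhds hpos)).tendsto.comp ?_
    exact ((continuous_const_add (X ω)).tendsto' 0 (X ω) (add_zero _)).mono_left nhdsWithin_le_nhds
  have hlim := le_of_tendsto_of_frequently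
    ((hUd (X ω) hpos).tendsto_slope_zero_right.add (hψ.const_mul μ)) hω
  change U' (X ω) - lam * ρ ω - μ * -psi P m a₀ a₁ X (X ω) ≤ 0
  linarith

/-- a maximizer of `E[U(X)] - μ h(X) - λ E[ρX]` over `L⁰₊` (with finite
supremum) satisfies `U′(X*) - λρ - μ h′(X*) ≤ 0` a.s. -/
theorem eu_lagrangian_foc_le (P : Measure Ω) [IsProbabilityMeasure P]
    (a₀ a₁ : ℝ) (ha₀ : 0 < a₀) (ha₀₁ : a₀ < a₁)
    (m : Measure ℝ) [IsProbabilityMeasure m] (hm : m (Set.Icc a₀ a₁) = 1)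
    (ρ : Ω → ℝ) (hmρ : Measurable ρ) (hρ0 : ∀ᵐ ω ∂P, 0 < ρ ω) (hρint : Integrable ρ P)
    (U U' : ℝ → ℝ)
    (hUc : ContinuousOn U (Set.Ici 0))
    (hUd : ∀ y : ℝ, 0 < y → HasDerivAt U (U' y) y)
    (hU'c : ContinuousOn U' (Set.Ioi 0))
    (hUmono : StrictMonoOn U (Set.Ioi 0))
    (hUconc : StrictConcaveOn ℝ (Set.Ioi 0) U)
    (hInada0 : Tendsto U' (nhdsWithin 0 (Set.Ioi 0)) atTop)
    (hInadaInf : Tendsto U' atTop (nhds 0))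
    (μ lam : ℝ) (hμ : 0 < μ) (hlam : 0 < lam)
    (hfin : ∃ r : ℝ, sSup (fullObj P m a₀ a₁ ρ U μ lam '' {X | Lpos P X}) = (r : EReal))
    (X : Ω → ℝ) (hX : Lpos P X)
    (hXmax : ∀ Y, Lpos P Y →
      fullObj P m a₀ a₁ ρ U μ lam Y ≤ fullObj P m a₀ a₁ ρ U μ lam X) :
    ∀ᵐ ω ∂P, U' (X ω) - lam * ρ ω - μ * hprime P m a₀ a₁ X ω ≤ 0 := by
  exact eu_lagrangian_foc_le_general ha₀ (hρ0.mono fun _ => le_of_lt) hρint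
    (monotoneOn_Ici_of_monotoneOn_Ioi hUmono.monotoneOn
      ((hUc 0 self_mem_Ici).mono Ioi_subset_Ici_self))
    (closure_Ioi (0 : ℝ) ▸ concaveOn_closure hUconc.concaveOn (by rwa [closure_Ioi]))
    hUd hInada0 hμ.le hlam hfin hX hXmax
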